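/- arXiv:1603.03893 — 2 statements merged into one kernel-verified Lean document; each statement's English description precedes it below -/
import Mathlib

section
/- Let b be a D-sequence, let N be a natural number and let k ∈ 𝕋 = ℝ/ℤ. Suppose that for every m ≥ N and every integer i with 1 ≤ i ≤ q_{m+1}, the element (i·b_m)·k lies in 𝕋_+. Then b_N·k = 0 in 𝕋 (equivalently, k is a torsion element of 𝕋 whose order divides b_N). -/
/-- A `D`-sequence: `b 0 = 1`, consecutive terms are distinct, and each term
divides the next. -/
def IsDSequence (b : ℕ → ℕ) : Prop :=
  b 0 = 1 ∧ (∀ n, b n ≠ b (n + 1)) ∧ ∀ n, b n ∣ b (n + 1)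

/-- For a D-sequence, `q (j+1) = b (j+1) / b j`. -/
def qRatio (b : ℕ → ℕ) (j : ℕ) : ℕ := b (j + 1) / b j

/-- `𝕋_+`: the set of points of `𝕋 = ℝ/ℤ` at distance at most `1/4` from `0`. -/
def Tplus : Set (AddCircle (1 : ℝ)) := {x | ‖x‖ ≤ 1 / 4}

/-!
Let `p > 0` be the circumference and let `x, 2x, …, qx` all have norm less than `p / 3`. Then
the multiples do not wrap around the circle: if `r` is the shortest real representative of `x` and
`‖i x‖ = i |r|`, then `(i + 1) |r| < 2p / 3`, so the multiple of `p` nearest to `(i + 1) r` has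
absolute value less than `p / 3 + 2p / 3 = p` and must be `0`. Hence `‖q x‖ = q ‖x‖`. For
`x = b m • k` and `q = b (m + 1) / b m ≥ 2` this gives `‖b (m + 1) • k‖ ≥ 2 ‖b m • k‖`, so a nonzero
`b N • k` would make the norms grow beyond any bound.
-/

section Circle

variable {p : ℝ}

lemma exists_coe_eq_norm_eq_abs (x : AddCircle p) :
    ∃ r : ℝ, (r : AddCircle p) = x ∧ ‖x‖ = |r| := by
  obtain ⟨y, rfl⟩ := QuotientAddGroup.mk_surjective x
  refine ⟨y - round (p⁻¹ * y) * p, ?_, AddCircle.norm_eq p⟩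
  rw [← zsmul_eq_mul, AddCircle.coe_sub, AddCircle.coe_zsmul, AddCircle.coe_period, smul_zero,
    sub_zero]

lemma norm_coe_eq_abs_of_norm_add_abs_lt {r : ℝ} (h : ‖(r : AddCircle p)‖ + |r| < |p|) :
    ‖(r : AddCircle p)‖ = |r| := by
  rw [AddCircle.norm_eq] at h ⊢
  set n := round (p⁻¹ * r)
  have hlt : |(n : ℝ)| * |p| < 1 * |p| :=
    calc |(n : ℝ)| * |p| = |r - (r - n * p)| := by rw [sub_sub_cancel, abs_mul]
      _ ≤ |r| + |r - n * p| := abs_sub _ _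
      _ < 1 * |p| := by linarith
  have hn : n = 0 :=
    Int.abs_lt_one_iff.mp (by exact_mod_cast lt_of_mul_lt_mul_right hlt (abs_nonneg p))
  simp [hn]

lemma norm_nsmul_eq_of_norm_add_mul_norm_lt {x : AddCircle p} {n : ℕ}
    (h : ‖n • x‖ + n * ‖x‖ < |p|) : ‖n • x‖ = n * ‖x‖ := by
  obtain ⟨r, rfl, hr⟩ := exists_coe_eq_norm_eq_abs x
  have habs : n * ‖(r : AddCircle p)‖ = |n • r| := by
    rw [hr, nsmul_eq_mul, abs_mul, Nat.abs_cast]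
  rw [habs, ← AddCircle.coe_nsmul] at h ⊢
  exact norm_coe_eq_abs_of_norm_add_abs_lt h

lemma norm_nsmul_eq_of_forall_norm_nsmul_lt {x : AddCircle p} {q : ℕ}
    (h : ∀ i, 1 ≤ i → i ≤ q → ‖i • x‖ < |p| / 3) : ‖q • x‖ = q * ‖x‖ := by
  induction q with
  | zero => simp
  | succ q ih =>
    have hx : ‖x‖ < |p| / 3 := by simpa using h 1 le_rfl (by omega)
    have hprev : q * ‖x‖ < |p| / 3 := by
      rcases q.eq_zero_or_pos with rfl | hq
      · simpa using (norm_nonneg x).trans_lt hx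
      · rw [← ih fun i hi hiq => h i hi (by omega)]
        exact h q hq q.le_succ
    have hnext : ‖(q + 1) • x‖ < |p| / 3 := h (q + 1) (by omega) le_rfl
    apply norm_nsmul_eq_of_norm_add_mul_norm_lt
    push_cast
    linarith

lemma eq_zero_of_forall_norm_nsmul_lt {x : ℕ → AddCircle p} {q : ℕ → ℕ} (hq : ∀ n, 2 ≤ q n)
    (hx : ∀ n, x (n + 1) = q n • x n)
    (h : ∀ n i, 1 ≤ i → i ≤ q n → ‖i • x n‖ < |p| / 3) : x 0 = 0 := by
  by_contra hne
  have hdouble (n : ℕ) : 2 * ‖x n‖ ≤ ‖x (n + 1)‖ := by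
    rw [hx, norm_nsmul_eq_of_forall_norm_nsmul_lt (h n)]
    gcongr
    exact_mod_cast hq n
  have hgrow : Filter.Tendsto (fun n => ‖x n‖) Filter.atTop Filter.atTop :=
    tendsto_atTop_of_geom_le (norm_pos_iff.mpr hne) one_lt_two hdouble
  obtain ⟨n, hn⟩ := (hgrow.eventually_ge_atTop (|p| / 3)).exists
  exact hn.not_gt (by simpa using h n 1 le_rfl (one_le_two.trans (hq n)))

end Circle

namespace IsDSequence

variable {b : ℕ → ℕ}

lemma ne_zero (hb : IsDSequence b) (n : ℕ) : b n ≠ 0 := by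
  obtain ⟨-, hne, hdvd⟩ := hb
  intro hn
  have hsucc : b (n + 1) = 0 := zero_dvd_iff.mp (hn ▸ hdvd n)
  exact hne n (hn.trans hsucc.symm)

lemma qRatio_mul (hb : IsDSequence b) (n : ℕ) : qRatio b n * b n = b (n + 1) :=
  Nat.div_mul_cancel (hb.2.2 n)

lemma two_le_qRatio (hb : IsDSequence b) (n : ℕ) : 2 ≤ qRatio b n := by
  have hlt : b n < b (n + 1) :=
    (Nat.le_of_dvd (Nat.pos_of_ne_zero (hb.ne_zero _)) (hb.2.2 n)).lt_of_ne (hb.2.1 n)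
  exact Nat.one_lt_div_of_mem_properDivisors (Nat.mem_properDivisors.mpr ⟨hb.2.2 n, hlt⟩)

end IsDSequence

/-- The strict bound `|p| / 3` is optimal: for `b n = 2 ^ n` and `k = p / 3` every multiple
`(i * b m) • k` that occurs has norm exactly `|p| / 3`. -/
theorem polar_character_annihilated_general {p : ℝ} {b : ℕ → ℕ} (hb : IsDSequence b) (N : ℕ)
    (k : AddCircle p)
    (hmult : ∀ m, N ≤ m → ∀ i : ℕ, 1 ≤ i → i ≤ qRatio b m → ‖(i * b m) • k‖ < |p| / 3) :
    b N • k = 0 := by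
  refine eq_zero_of_forall_norm_nsmul_lt (x := fun n => b (N + n) • k)
    (q := fun n => qRatio b (N + n)) (fun n => hb.two_le_qRatio _) (fun n => ?_)
    fun n i hi hiq => ?_
  · rw [← mul_smul, hb.qRatio_mul, add_assoc]
  · rw [← mul_smul]
    exact hmult (N + n) (N.le_add_right n) i hi hiq

theorem polar_character_annihilated (b : ℕ → ℕ) (hb : IsDSequence b) (N : ℕ)
    (k : AddCircle (1 : ℝ))
    (hmult : ∀ m, N ≤ m → ∀ i : ℕ, 1 ≤ i → i ≤ qRatio b m → (i * b m) • k ∈ Tplus) :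
    b N • k = 0 :=
  polar_character_annihilated_general hb N k fun m hm i hi hiq =>
    (hmult m hm i hi hiq).trans_lt (by norm_num)
end

section
/- Let b be a D-sequence and let N be a natural number. Then the set of all k ∈ 𝕋 = ℝ/ℤ such that (i·b_m)·k ∈ 𝕋_+ for every m ≥ N and every integer i with 1 ≤ i ≤ q_{m+1} is a finite set (it is contained in the subgroup of elements annihilated by b_N, which has exactly b_N elements). -/
/-!
As long as the multiples `x, 2x, …, nx` of a point of `ℝ/pℤ` all stay at distance less than `p / 3`
from `0`, no wrapping around the circle takes place and `‖n • x‖ = n * ‖x‖`: a lift `r` of minimal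
absolute value has `|n * r| < 2 * p / 3`, and the only point of `n * r + pℤ` within `p / 3` of `0`
is then `n * r` itself. The constant is sharp: `1/3` and `2/3` are both at distance
`1/3` from `0` in `ℝ/ℤ`.

For `k` in the polar set this makes `‖b m • k‖` grow by exactly the factor `q (m + 1)` at each
step, hence proportionally to `b m` for `m ≥ N`. Since `b m → ∞` while norms on the circle are
bounded, `b N • k = 0`.
-/

section AddCircle

variable {p : ℝ}

lemma exists_coe_eq_and_abs_eq_norm (x : AddCircle p) :
    ∃ r : ℝ, (r : AddCircle p) = x ∧ |r| = ‖x‖ := by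
  induction x using QuotientAddGroup.induction_on with
  | H y =>
    refine ⟨y - round (p⁻¹ * y) * p, ?_, (AddCircle.norm_eq p).symm⟩
    rw [AddCircle.coe_sub, sub_eq_self, AddCircle.coe_eq_zero_iff]
    exact ⟨round (p⁻¹ * y), zsmul_eq_mul _ _⟩

lemma norm_coe_eq_abs_of_abs_add_norm_lt {r : ℝ} (h : |r| + ‖(r : AddCircle p)‖ < |p|) :
    ‖(r : AddCircle p)‖ = |r| := by
  rw [AddCircle.norm_eq] at h ⊢
  set n : ℤ := round (p⁻¹ * r)
  have hnp : |(n : ℝ)| * |p| < 1 * |p| :=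
    calc |(n : ℝ)| * |p| = |r - (r - n * p)| := by rw [sub_sub_cancel, abs_mul]
      _ ≤ |r| + |r - n * p| := abs_sub _ _
      _ < 1 * |p| := by rwa [one_mul]
  have hn : n = 0 := by
    rw [← Int.abs_lt_one_iff]
    exact_mod_cast lt_of_mul_lt_mul_right hnp (abs_nonneg p)
  rw [hn, Int.cast_zero, zero_mul, sub_zero]

lemma norm_nsmul_eq_mul_of_mul_add_norm_lt {x : AddCircle p} {n : ℕ}
    (h : n * ‖x‖ + ‖n • x‖ < |p|) : ‖n • x‖ = n * ‖x‖ := by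
  obtain ⟨r, rfl, hr⟩ := exists_coe_eq_and_abs_eq_norm x
  have habs : n * ‖(r : AddCircle p)‖ = |n • r| := by rw [← hr, nsmul_eq_mul, abs_mul, Nat.abs_cast]
  rw [habs, ← AddCircle.coe_nsmul] at h ⊢
  exact norm_coe_eq_abs_of_abs_add_norm_lt h

lemma norm_nsmul_eq_mul_of_forall_norm_nsmul_lt {x : AddCircle p} {n : ℕ}
    (h : ∀ i, 1 ≤ i → i ≤ n → ‖i • x‖ < |p| / 3) : ‖n • x‖ = n * ‖x‖ := by
  induction n with
  | zero => simp
  | succ n ih =>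
    have hx : ‖x‖ < |p| / 3 := by simpa only [one_nsmul] using h 1 le_rfl (by lia)
    have hn : n * ‖x‖ < |p| / 3 := by
      rcases n.eq_zero_or_pos with rfl | hpos
      · simpa using (norm_nonneg x).trans_lt hx
      · rw [← ih fun i hi hin ↦ h i hi (by lia)]
        exact h n hpos n.le_succ
    have hsucc : ‖(n + 1) • x‖ < |p| / 3 := h (n + 1) (by lia) le_rfl
    apply norm_nsmul_eq_mul_of_mul_add_norm_lt
    push_cast
    linarith

end AddCircle

section DvdSequence

variable {b : ℕ → ℕ} (hdvd : ∀ n, b n ∣ b (n + 1)) (hne : ∀ n, b n ≠ b (n + 1))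

include hdvd in
lemma qRatio_mul (n : ℕ) : qRatio b n * b n = b (n + 1) :=
  Nat.div_mul_cancel (hdvd n)

section StrictMono

include hdvd hne

lemma pos_of_dvd_succ_of_ne_succ (n : ℕ) : 0 < b n := by
  refine Nat.pos_of_ne_zero fun h0 ↦ hne n ?_
  have hsucc : 0 ∣ b (n + 1) := h0 ▸ hdvd n
  rw [h0, zero_dvd_iff.mp hsucc]

lemma strictMono_of_dvd_succ_of_ne_succ : StrictMono b :=
  strictMono_nat_of_lt_succ fun n ↦
    (Nat.le_of_dvd (pos_of_dvd_succ_of_ne_succ hdvd hne (n + 1)) (hdvd n)).lt_of_ne (hne n)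

lemma one_le_qRatio (n : ℕ) : 1 ≤ qRatio b n :=
  Nat.div_pos (strictMono_of_dvd_succ_of_ne_succ hdvd hne n.lt_succ_self).le
    (pos_of_dvd_succ_of_ne_succ hdvd hne n)

end StrictMono

section Polar

variable {p : ℝ} {N : ℕ} {k : AddCircle p}
  (hk : ∀ m, N ≤ m → ∀ i : ℕ, 1 ≤ i → i ≤ qRatio b m → ‖(i * b m) • k‖ < |p| / 3)
include hdvd hk

lemma norm_nsmul_succ_eq_qRatio_mul {m : ℕ} (hm : N ≤ m) :
    ‖b (m + 1) • k‖ = qRatio b m * ‖b m • k‖ := by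
  rw [← qRatio_mul hdvd, mul_nsmul']
  refine norm_nsmul_eq_mul_of_forall_norm_nsmul_lt fun i hi hiq ↦ ?_
  rw [← mul_nsmul']
  exact hk m hm i hi hiq

lemma mul_norm_nsmul_eq_mul_norm_nsmul {m : ℕ} (hm : N ≤ m) :
    b m * ‖b N • k‖ = b N * ‖b m • k‖ := by
  induction m, hm using Nat.le_induction with
  | base => rfl
  | succ m hm ih =>
    rw [norm_nsmul_succ_eq_qRatio_mul hdvd hk hm, ← qRatio_mul hdvd, Nat.cast_mul, mul_assoc, ih,
      mul_left_comm]

include hne in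
theorem nsmul_eq_zero_of_forall_norm_lt : b N • k = 0 := by
  by_contra hNk
  obtain ⟨m, hm⟩ := exists_lt_nsmul (norm_pos_iff.mpr hNk) (b N * (|p| / 3))
  have hbound : ‖b (max m N) • k‖ < |p| / 3 := by
    simpa only [one_mul] using hk _ (le_max_right m N) 1 le_rfl (one_le_qRatio hdvd hne _)
  have hle : m ≤ b (max m N) :=
    (le_max_left m N).trans (strictMono_of_dvd_succ_of_ne_succ hdvd hne).le_apply
  refine hm.not_ge ?_
  calc m • ‖b N • k‖ = m * ‖b N • k‖ := nsmul_eq_mul _ _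
    _ ≤ b (max m N) * ‖b N • k‖ := by gcongr
    _ = b N * ‖b (max m N) • k‖ := mul_norm_nsmul_eq_mul_norm_nsmul hdvd hk (le_max_right m N)
    _ ≤ b N * (|p| / 3) := by gcongr

end Polar

end DvdSequence

theorem polar_is_finite_general {b : ℕ → ℕ} (hdvd : ∀ n, b n ∣ b (n + 1))
    (hne : ∀ n, b n ≠ b (n + 1)) (p : ℝ) (N : ℕ) :
    {k : AddCircle p | ∀ m, N ≤ m → ∀ i : ℕ, 1 ≤ i → i ≤ qRatio b m →
      ‖(i * b m) • k‖ < |p| / 3}.Finite :=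
  (AddCircle.finite_torsion p (pos_of_dvd_succ_of_ne_succ hdvd hne N)).subset fun _ hk ↦
    nsmul_eq_zero_of_forall_norm_lt hdvd hne hk

theorem polar_is_finite (b : ℕ → ℕ) (hb : IsDSequence b) (N : ℕ) :
    {k : AddCircle (1 : ℝ) |
      ∀ m, N ≤ m → ∀ i : ℕ, 1 ≤ i → i ≤ qRatio b m → (i * b m) • k ∈ Tplus}.Finite :=
  (polar_is_finite_general hb.2.2 hb.2.1 1 N).subset fun _ hk m hm i hi hiq ↦
    (hk m hm i hi hiq).trans_lt (by norm_num)
end
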